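/- Let g : ℝ → ℝ be infinitely differentiable (C^∞) and define f(λ) = 1 − √(λ/(2−λ)) · g(2λ − λ²) for λ ∈ (0,2). Then for every integer n ≥ 0: f^{(2n)}(1) − (1/(2n+1)) · f^{(2n+1)}(1) equals 1 if n = 0, and equals 0 if n ≥ 1, where f^{(k)}(1) denotes the k-th derivative of f at λ = 1. -/

import Mathlib

/-!
Since `l / (2 - l) = l ^ 2 / (2 * l - l ^ 2)`, near `1` the function is `l ↦ 1 - l * h l` with
`h l = g (2 * l - l ^ 2) / √(2 * l - l ^ 2)`, and `h` is invariant under `l ↦ 2 - l`. Its odd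
derivatives at `1` therefore vanish, so in the Leibniz rule
`(l * h)⁽ᵏ⁾ = l * h⁽ᵏ⁾ + k * h⁽ᵏ⁻¹⁾` only one term survives: `(l * h)⁽²ⁿ⁾ = h⁽²ⁿ⁾` and
`(l * h)⁽²ⁿ⁺¹⁾ = (2 * n + 1) * h⁽²ⁿ⁾` at `l = 1`.
-/

open Filter Topology

section IteratedDeriv

variable {𝕜 F : Type*} [NontriviallyNormedField 𝕜] [NormedAddCommGroup F] [NormedSpace 𝕜 F]
  {h : 𝕜 → F} {a : 𝕜} {k : ℕ}

lemma iteratedDeriv_id_smul (hh : ContDiffAt 𝕜 k h a) :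
    iteratedDeriv k (fun x ↦ x • h x) a =
      a • iteratedDeriv k h a + k • iteratedDeriv (k - 1) h a := by
  induction k generalizing h with
  | zero => simp
  | succ k ih =>
    have hderiv : deriv (fun x ↦ x • h x) =ᶠ[𝓝 a] fun x ↦ h x + x • deriv h x := by
      filter_upwards [hh.eventually (by simp)] with x hx
      have hdiff : DifferentiableAt 𝕜 h x := hx.differentiableAt (by simp)
      simpa [add_comm] using deriv_fun_smul differentiableAt_fun_id hdiff
    have hh_deriv : ContDiffAt 𝕜 k (deriv h) a := hh.derivWithin (mod_cast le_rfl)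
    have hh_pred : ContDiffAt 𝕜 k h a := hh.of_le (mod_cast k.le_succ)
    have lower_term : k • iteratedDeriv (k - 1) (deriv h) a = k • iteratedDeriv k h a := by
      cases k with
      | zero => simp
      | succ j => rw [Nat.add_sub_cancel, ← iteratedDeriv_succ']
    rw [iteratedDeriv_succ', hderiv.iteratedDeriv_eq,
      iteratedDeriv_fun_add hh_pred (contDiffAt_fun_id.fun_smul hh_deriv), ih hh_deriv, lower_term,
      ← iteratedDeriv_succ', Nat.add_sub_cancel, succ_nsmul]
    abel

lemma iteratedDeriv_eq_zero_of_odd_of_reflection [IsAddTorsionFree F]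
    (hsymm : (fun x ↦ h (2 * a - x)) =ᶠ[𝓝 a] h) (hk : Odd k) : iteratedDeriv k h a = 0 := by
  have hneg : iteratedDeriv k h a = -iteratedDeriv k h a := by
    simpa [iteratedDeriv_comp_const_sub, hk.neg_one_pow, two_mul] using
      (hsymm.iteratedDeriv_eq k).symm
  exact self_eq_neg.mp hneg

lemma smul_iteratedDeriv_succ_id_smul_of_reflection [IsAddTorsionFree F]
    (hh : ContDiffAt 𝕜 (k + 1 : ℕ) h a) (hsymm : (fun x ↦ h (2 * a - x)) =ᶠ[𝓝 a] h)
    (hk : Even k) :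
    a • iteratedDeriv (k + 1) (fun x ↦ x • h x) a =
      (k + 1) • iteratedDeriv k (fun x ↦ x • h x) a := by
  have lower_term : k • iteratedDeriv (k - 1) h a = 0 := by
    rcases k.eq_zero_or_pos with rfl | hpos
    · simp
    · have hk_pred : Odd (k - 1) := Nat.Even.sub_odd hpos hk odd_one
      rw [iteratedDeriv_eq_zero_of_odd_of_reflection hsymm hk_pred, smul_zero]
  rw [iteratedDeriv_id_smul hh, iteratedDeriv_id_smul (hh.of_le (mod_cast k.le_succ)), lower_term,
    iteratedDeriv_eq_zero_of_odd_of_reflection hsymm hk.add_one, Nat.add_sub_cancel, smul_zero,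
    zero_add, add_zero, smul_comm]

lemma iteratedDeriv_const_sub_id_smul_sub_succ_of_reflection [CharZero 𝕜] (c : F)
    (hh : ContDiffAt 𝕜 (k + 1 : ℕ) h a) (hsymm : (fun x ↦ h (2 * a - x)) =ᶠ[𝓝 a] h)
    (hk : Even k) :
    iteratedDeriv k (fun x ↦ c - x • h x) a
      - (a / (k + 1)) • iteratedDeriv (k + 1) (fun x ↦ c - x • h x) a
      = if k = 0 then c else 0 := by
  have : IsAddTorsionFree F := .of_isTorsionFree 𝕜 F
  have hsub {j : ℕ} (hj : j ≤ k + 1) : iteratedDeriv j (fun x ↦ c - x • h x) a =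
      (if j = 0 then c else 0) - iteratedDeriv j (fun x ↦ x • h x) a := by
    have hh_j : ContDiffAt 𝕜 j h a := hh.of_le (Nat.cast_le.mpr hj)
    rw [iteratedDeriv_fun_sub contDiffAt_const (contDiffAt_fun_id.fun_smul hh_j),
      iteratedDeriv_const]
  have hratio : (a / (k + 1)) • iteratedDeriv (k + 1) (fun x ↦ x • h x) a =
      iteratedDeriv k (fun x ↦ x • h x) a := by
    rw [div_eq_inv_mul, mul_smul, smul_iteratedDeriv_succ_id_smul_of_reflection hh hsymm hk,
      ← Nat.cast_smul_eq_nsmul 𝕜, Nat.cast_succ, inv_smul_smul₀ k.cast_add_one_ne_zero]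
  rw [hsub k.le_succ, hsub le_rfl, if_neg k.succ_ne_zero, zero_sub, smul_neg, hratio]
  abel

end IteratedDeriv

lemma sqrt_div_eq_div_sqrt_mul {x : ℝ} (hx : 0 ≤ x) (y : ℝ) : √(x / y) = x / √(x * y) := by
  rcases hx.eq_or_lt with rfl | hpos
  · simp
  · rw [← mul_div_mul_left x y hpos.ne', Real.sqrt_div (mul_self_nonneg x), Real.sqrt_mul_self hx]

theorem stmt_6_general {F : Type*} [NormedAddCommGroup F] [NormedSpace ℝ F] (c : F) (g : ℝ → F)
    (n : ℕ) (hg : ContDiffAt ℝ (2 * n + 1 : ℕ) g 1) :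
    iteratedDeriv (2 * n) (fun l : ℝ ↦ c - √(l / (2 - l)) • g (2 * l - l ^ 2)) 1
      - (1 / (2 * (n : ℝ) + 1)) •
        iteratedDeriv (2 * n + 1) (fun l : ℝ ↦ c - √(l / (2 - l)) • g (2 * l - l ^ 2)) 1
      = if n = 0 then c else 0 := by
  let h : ℝ → F := fun l ↦ (√(2 * l - l ^ 2))⁻¹ • g (2 * l - l ^ 2)
  have hsymm (l : ℝ) : h (2 * 1 - l) = h l := by
    simp only [h, show 2 * (2 * 1 - l) - (2 * 1 - l) ^ 2 = 2 * l - l ^ 2 by ring]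
  have hsmooth : ContDiffAt ℝ (2 * n + 1 : ℕ) h 1 := by
    have hquad : ContDiffAt ℝ (2 * n + 1 : ℕ) (fun l : ℝ ↦ 2 * l - l ^ 2) 1 := by fun_prop
    refine ((hquad.sqrt (by norm_num)).inv (by norm_num)).smul (ContDiffAt.comp 1 ?_ hquad)
    convert hg using 1
    norm_num
  have hfactor : (fun l : ℝ ↦ c - √(l / (2 - l)) • g (2 * l - l ^ 2))
      =ᶠ[𝓝 1] fun l ↦ c - l • h l := by
    filter_upwards [lt_mem_nhds one_pos] with l hl
    rw [sqrt_div_eq_div_sqrt_mul hl.le, show l * (2 - l) = 2 * l - l ^ 2 by ring, div_eq_mul_inv,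
      mul_smul]
  rw [hfactor.iteratedDeriv_eq, hfactor.iteratedDeriv_eq]
  simpa using iteratedDeriv_const_sub_id_smul_sub_succ_of_reflection c hsmooth
    (.of_forall hsymm) (even_two_mul n)

/-- Lemma 2: for f(λ) = 1 - √(λ/(2-λ))·g(2λ-λ²),
f^{(2n)}(1) - f^{(2n+1)}(1)/(2n+1) equals 1 for n = 0 and 0 for n ≥ 1. -/
theorem stmt_6 (g : ℝ → ℝ) (hg : ContDiff ℝ (⊤ : ℕ∞) g) (n : ℕ) :
    iteratedDeriv (2 * n)
        (fun l : ℝ => 1 - Real.sqrt (l / (2 - l)) * g (2 * l - l ^ 2)) 1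
      - (1 / (2 * (n : ℝ) + 1)) *
        iteratedDeriv (2 * n + 1)
          (fun l : ℝ => 1 - Real.sqrt (l / (2 - l)) * g (2 * l - l ^ 2)) 1
      = if n = 0 then 1 else 0 :=
  stmt_6_general 1 g n (hg.contDiffAt.of_le (WithTop.coe_le_coe.mpr le_top))
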